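/- arXiv:2404.00836 — 3 statements merged into one kernel-verified Lean document; each statement's English description precedes it below -/
import Mathlib

section
/- Fix a model point w ∈ E, a step size γ ≥ 0, and a variance level σ² ≥ 0. Let G : Ω → E be a Bochner-integrable random vector with ∫ G dμ = ∇L(w) (unbiased gradient estimate), with ω ↦ ‖G ω‖² integrable and ∫ ‖G ω − ∇L(w)‖² dμ ≤ σ² (variance bound), and assume ω ↦ L(w − γ • G ω) is integrable. Then the expected one-step SGD descent satisfies ∫ L(w − γ • G ω) dμ(ω) − L(w) ≤ −γ·(1 − ρ·γ/2)·‖∇L(w)‖² + (ρ·γ²/2)·σ². -/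
open MeasureTheory
open scoped RealInnerProductSpace

/-- One-step expected SGD descent bound under ρ-smoothness, unbiased gradient
estimate and variance bound σ². -/
theorem expected_one_step_sgd_descent
    {E : Type*} [NormedAddCommGroup E] [InnerProductSpace ℝ E] [CompleteSpace E]
    {Ω : Type*} [MeasurableSpace Ω] (μ : Measure Ω) [IsProbabilityMeasure μ]
    (L : E → ℝ) (gradL : E → E) (ρ : ℝ) (hρ : 0 ≤ ρ)
    (hsmooth : ∀ u v : E, L u ≤ L v + ⟪gradL v, u - v⟫ + ρ / 2 * ‖u - v‖ ^ 2)
    (w : E) (γ σ2 : ℝ) (hγ : 0 ≤ γ) (hσ2 : 0 ≤ σ2)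
    (G : Ω → E) (hGint : Integrable G μ)
    (hunbiased : ∫ ω, G ω ∂μ = gradL w)
    (hG2 : Integrable (fun ω => ‖G ω‖ ^ 2) μ)
    (hvar : ∫ ω, ‖G ω - gradL w‖ ^ 2 ∂μ ≤ σ2)
    (hLint : Integrable (fun ω => L (w - γ • G ω)) μ) :
    (∫ ω, L (w - γ • G ω) ∂μ) - L w ≤
      -γ * (1 - ρ * γ / 2) * ‖gradL w‖ ^ 2 + ρ * γ ^ 2 / 2 * σ2 := by
  have hin : Integrable (fun ω => (⟪gradL w, G ω⟫ : ℝ)) μ := hGint.const_inner (gradL w)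
  have hinner : ∫ ω, (⟪gradL w, G ω⟫ : ℝ) ∂μ = ‖gradL w‖ ^ 2 := by
    rw [integral_inner hGint (gradL w), hunbiased, real_inner_self_eq_norm_sq]
  have hvar' : ∫ ω, ‖G ω - gradL w‖ ^ 2 ∂μ = (∫ ω, ‖G ω‖ ^ 2 ∂μ) - ‖gradL w‖ ^ 2 := by
    have h1 : ∀ ω, ‖G ω - gradL w‖ ^ 2
        = (‖G ω‖ ^ 2 - 2 * (⟪gradL w, G ω⟫ : ℝ)) + ‖gradL w‖ ^ 2 := by
      intro ω
      rw [norm_sub_sq_real, real_inner_comm]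
    simp_rw [h1]
    have hi0 : Integrable (fun ω => ‖G ω‖ ^ 2 - 2 * (⟪gradL w, G ω⟫ : ℝ)) μ :=
      hG2.sub (hin.const_mul 2)
    rw [integral_add hi0 (integrable_const _),
      integral_sub hG2 (hin.const_mul 2), integral_const_mul, hinner]
    simp
    ring
  have hpt : ∀ ω, L (w - γ • G ω)
      ≤ (L w - γ * (⟪gradL w, G ω⟫ : ℝ)) + ρ * γ ^ 2 / 2 * ‖G ω‖ ^ 2 := by
    intro ω
    have h := hsmooth (w - γ • G ω) w
    have e : w - γ • G ω - w = -(γ • G ω) := by abel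
    rw [e, inner_neg_right, real_inner_smul_right, norm_neg, norm_smul, mul_pow,
      Real.norm_eq_abs, sq_abs] at h
    linarith
  have hi1 : Integrable (fun ω => L w - γ * (⟪gradL w, G ω⟫ : ℝ)) μ :=
    (integrable_const _).sub (hin.const_mul γ)
  have hmono := integral_mono hLint (hi1.add (hG2.const_mul (ρ * γ ^ 2 / 2))) hpt
  simp only [Pi.add_apply] at hmono
  rw [integral_add hi1 (hG2.const_mul _), integral_sub (integrable_const _) (hin.const_mul γ),
    integral_const_mul, integral_const_mul, hinner] at hmono
  simp only [integral_const, probReal_univ, one_smul] at hmono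
  rw [hvar'] at hvar
  have hc : 0 ≤ ρ * γ ^ 2 / 2 := by positivity
  have := mul_le_mul_of_nonneg_left hvar hc
  linarith
end

section
/- Fix a model point w ∈ E, a step size γ̂ ≥ 0, a noise level α̂ ≥ 0, K ≥ 1 devices with batch sizes B k > 0 for k = 1,…,K, total batch size B_tot = Σ_k B k, and aggregation weights λ k = B k / B_tot. Let G k : Ω → E (k = 1,…,K) be Bochner-integrable random vectors with ∫ G k dμ = ∇L(w), with ω ↦ ‖G k ω‖² integrable and ∫ ‖G k ω − ∇L(w)‖² dμ ≤ α̂²/(B k) for each k, and let Ḡ ω = Σ_k λ k • G k ω denote the aggregated gradient estimate; assume ω ↦ L(w − γ̂ • Ḡ ω) is integrable. Then ∫ L(w − γ̂ • Ḡ ω) dμ(ω) − L(w) ≤ −γ̂·(1 − ρ̂·γ̂/2)·‖∇L(w)‖² + (ρ̂·γ̂²/2)·K·α̂²/B_tot. -/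
open MeasureTheory
open scoped RealInnerProductSpace

/-- One-round expected loss decrease of federated SGD with K devices whose
mini-batch gradient estimates are aggregated with weights proportional to
their batch sizes. -/
theorem federated_one_round_expected_descent
    {E : Type*} [NormedAddCommGroup E] [InnerProductSpace ℝ E] [CompleteSpace E]
    {Ω : Type*} [MeasurableSpace Ω] (μ : Measure Ω) [IsProbabilityMeasure μ]
    (L : E → ℝ) (gradL : E → E) (ρhat : ℝ) (hρhat : 0 ≤ ρhat)
    (hsmooth : ∀ u v : E, L u ≤ L v + ⟪gradL v, u - v⟫ + ρhat / 2 * ‖u - v‖ ^ 2)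
    (w : E) (γhat αhat : ℝ) (hγ : 0 ≤ γhat) (hα : 0 ≤ αhat)
    (K : ℕ) (hK : 1 ≤ K) (B : Fin K → ℝ) (hB : ∀ k, 0 < B k)
    (G : Fin K → Ω → E) (hGint : ∀ k, Integrable (G k) μ)
    (hunbiased : ∀ k, ∫ ω, G k ω ∂μ = gradL w)
    (hG2 : ∀ k, Integrable (fun ω => ‖G k ω‖ ^ 2) μ)
    (hvar : ∀ k, ∫ ω, ‖G k ω - gradL w‖ ^ 2 ∂μ ≤ αhat ^ 2 / B k)
    (hLint : Integrable
      (fun ω => L (w - γhat • ∑ k, (B k / ∑ j, B j) • G k ω)) μ) :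
    (∫ ω, L (w - γhat • ∑ k, (B k / ∑ j, B j) • G k ω) ∂μ) - L w ≤
      -γhat * (1 - ρhat * γhat / 2) * ‖gradL w‖ ^ 2 +
        ρhat * γhat ^ 2 / 2 * (K * αhat ^ 2 / ∑ k, B k) := by
  have hKne : Nonempty (Fin K) := ⟨⟨0, hK⟩⟩
  have hS : 0 < ∑ j, B j := Finset.sum_pos (fun k _ => hB k) Finset.univ_nonempty
  set S := ∑ j, B j with hSdef
  have hl0 : ∀ k, 0 ≤ B k / S := fun k => (div_pos (hB k) hS).le
  have hl1 : ∑ k, B k / S = 1 := by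
    rw [← Finset.sum_div]; exact div_self hS.ne'
  have hinner : ∀ k, Integrable (fun ω => ⟪gradL w, G k ω⟫) μ :=
    fun k => (hGint k).const_inner (gradL w)
  have hinnerI : ∀ k, ∫ ω, ⟪gradL w, G k ω⟫ ∂μ = ‖gradL w‖ ^ 2 := by
    intro k
    rw [integral_inner (hGint k), hunbiased k, real_inner_self_eq_norm_sq]
  have hsq : ∀ k, ∫ ω, ‖G k ω‖ ^ 2 ∂μ ≤ αhat ^ 2 / B k + ‖gradL w‖ ^ 2 := by
    intro k
    have h1 : ∫ ω, ‖G k ω - gradL w‖ ^ 2 ∂μ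
        = ∫ ω, (‖G k ω‖ ^ 2 - 2 * ⟪gradL w, G k ω⟫ + ‖gradL w‖ ^ 2) ∂μ := by
      congr 1
      funext ω
      rw [norm_sub_sq_real, real_inner_comm]
    have h2 := hvar k
    have hd : Integrable (fun ω => ‖G k ω‖ ^ 2 - 2 * ⟪gradL w, G k ω⟫) μ :=
      (hG2 k).sub ((hinner k).const_mul 2)
    rw [h1, integral_add hd (integrable_const _),
      integral_sub (hG2 k) ((hinner k).const_mul 2), integral_const_mul, hinnerI k] at h2
    simp at h2
    linarith
  have hterm : ∀ k, Integrable (fun ω => (B k / S) *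
      (-γhat * ⟪gradL w, G k ω⟫ + ρhat * γhat ^ 2 / 2 * ‖G k ω‖ ^ 2)) μ :=
    fun k => (((hinner k).const_mul _).add ((hG2 k).const_mul _)).const_mul _
  have hpt : ∀ ω, L (w - γhat • ∑ k, (B k / S) • G k ω) ≤ L w + ∑ k, (B k / S) *
      (-γhat * ⟪gradL w, G k ω⟫ + ρhat * γhat ^ 2 / 2 * ‖G k ω‖ ^ 2) := by
    intro ω
    have h := hsmooth (w - γhat • ∑ k, (B k / S) • G k ω) w
    have hc : ‖∑ k, (B k / S) • G k ω‖ ^ 2 ≤ ∑ k, (B k / S) * ‖G k ω‖ ^ 2 := by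
      have hcv : ConvexOn ℝ Set.univ (fun x : E => ‖x‖ ^ 2) :=
        (convexOn_norm convex_univ).pow (fun x _ => norm_nonneg x) 2
      exact hcv.map_sum_le (fun k _ => hl0 k) hl1 (fun k _ => Set.mem_univ _)
    have e1 : w - γhat • ∑ k, (B k / S) • G k ω - w
        = -(γhat • ∑ k, (B k / S) • G k ω) := by abel
    rw [e1, inner_neg_right, norm_neg, norm_smul, mul_pow, inner_smul_right, inner_sum,
      Real.norm_eq_abs, sq_abs] at h
    simp only [inner_smul_right] at h
    have e2 : ∑ k, (B k / S) *
        (-γhat * ⟪gradL w, G k ω⟫ + ρhat * γhat ^ 2 / 2 * ‖G k ω‖ ^ 2)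
        = -γhat * ∑ k, (B k / S) * ⟪gradL w, G k ω⟫
          + ρhat * γhat ^ 2 / 2 * ∑ k, (B k / S) * ‖G k ω‖ ^ 2 := by
      rw [Finset.mul_sum, Finset.mul_sum, ← Finset.sum_add_distrib]
      exact Finset.sum_congr rfl fun k _ => by ring
    rw [e2]
    have h3 := mul_le_mul_of_nonneg_left hc (show 0 ≤ ρhat * γhat ^ 2 / 2 by positivity)
    linarith
  have hmain := integral_mono hLint
    ((integrable_const (L w)).add (integrable_finsetSum Finset.univ fun k _ => hterm k)) hpt
  have hI : ∫ ω, (L w + ∑ k, (B k / S) *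
      (-γhat * ⟪gradL w, G k ω⟫ + ρhat * γhat ^ 2 / 2 * ‖G k ω‖ ^ 2)) ∂μ
      = L w + ∑ k, (B k / S) *
      (-γhat * ‖gradL w‖ ^ 2 + ρhat * γhat ^ 2 / 2 * ∫ ω, ‖G k ω‖ ^ 2 ∂μ) := by
    rw [integral_add (integrable_const _) (integrable_finsetSum Finset.univ fun k _ => hterm k),
      integral_finsetSum _ (fun k _ => hterm k)]
    congr 1
    · simp
    · refine Finset.sum_congr rfl fun k _ => ?_
      rw [integral_const_mul, integral_add ((hinner k).const_mul _) ((hG2 k).const_mul _),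
        integral_const_mul, integral_const_mul, hinnerI k]
  have hb : ∑ k, (B k / S) *
      (-γhat * ‖gradL w‖ ^ 2 + ρhat * γhat ^ 2 / 2 * ∫ ω, ‖G k ω‖ ^ 2 ∂μ)
      ≤ ∑ k, ((B k / S) * (-γhat * (1 - ρhat * γhat / 2) * ‖gradL w‖ ^ 2)
        + ρhat * γhat ^ 2 / 2 * (αhat ^ 2 / S)) := by
    refine Finset.sum_le_sum fun k _ => ?_
    have h4 := mul_le_mul_of_nonneg_left (mul_le_mul_of_nonneg_left (hsq k)
      (show 0 ≤ ρhat * γhat ^ 2 / 2 by positivity)) (hl0 k)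
    have h5 : (B k / S) * (αhat ^ 2 / B k) = αhat ^ 2 / S := by
      have := (hB k).ne'
      field_simp
    rw [← h5]
    linarith
  rw [Finset.sum_add_distrib, ← Finset.sum_mul, hl1] at hb
  simp only [Finset.sum_const, Finset.card_univ, Fintype.card_fin, nsmul_eq_mul] at hb
  have e3 : (K : ℝ) * (ρhat * γhat ^ 2 / 2 * (αhat ^ 2 / S))
      = ρhat * γhat ^ 2 / 2 * (K * αhat ^ 2 / S) := by ring
  have hm2 := hmain.trans_eq hI
  linarith
end

section
/- Fix g ∈ E, K ≥ 1, batch sizes B k > 0 for k = 1,…,K with B_tot = Σ_k B k and weights λ k = B k / B_tot, and α̂ ≥ 0. Let G k : Ω → E be Bochner-integrable random vectors with ∫ G k dμ = g, with ω ↦ ‖G k ω‖² integrable and ∫ ‖G k ω − g‖² dμ ≤ α̂²/(B k) for each k. Then the second moment of the aggregated estimate satisfies ∫ ‖Σ_k λ k • G k ω‖² dμ(ω) ≤ ‖g‖² + K·α̂²/B_tot. -/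
open MeasureTheory

/-- Second-moment bound for the aggregated gradient estimate: Jensen's
inequality for ‖·‖² combined with the per-device variance bounds. -/
theorem aggregated_second_moment_bound
    {E : Type*} [NormedAddCommGroup E] [InnerProductSpace ℝ E] [CompleteSpace E]
    {Ω : Type*} [MeasurableSpace Ω] (μ : Measure Ω) [IsProbabilityMeasure μ]
    (g : E) (K : ℕ) (hK : 1 ≤ K) (B : Fin K → ℝ) (hB : ∀ k, 0 < B k)
    (αhat : ℝ) (hα : 0 ≤ αhat)
    (G : Fin K → Ω → E) (hGint : ∀ k, Integrable (G k) μ)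
    (hmean : ∀ k, ∫ ω, G k ω ∂μ = g)
    (hG2 : ∀ k, Integrable (fun ω => ‖G k ω‖ ^ 2) μ)
    (hvar : ∀ k, ∫ ω, ‖G k ω - g‖ ^ 2 ∂μ ≤ αhat ^ 2 / B k) :
    ∫ ω, ‖∑ k, (B k / ∑ j, B j) • G k ω‖ ^ 2 ∂μ ≤
      ‖g‖ ^ 2 + K * αhat ^ 2 / ∑ k, B k := by
  have hne : Nonempty (Fin K) := ⟨⟨0, hK⟩⟩
  have hS : 0 < ∑ j, B j := Finset.sum_pos (fun k _ => hB k) Finset.univ_nonempty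
  have hsecond : ∀ k, ∫ ω, ‖G k ω‖ ^ 2 ∂μ ≤ ‖g‖ ^ 2 + αhat ^ 2 / B k := by
    intro k
    have hin : Integrable (fun ω => inner ℝ g (G k ω)) μ := (hGint k).const_inner g
    have h1 : ∀ ω, ‖G k ω - g‖ ^ 2 = ‖G k ω‖ ^ 2 - 2 * inner ℝ g (G k ω) + ‖g‖ ^ 2 := by
      intro ω
      rw [norm_sub_sq_real, real_inner_comm]
    have h2 : ∫ ω, ‖G k ω - g‖ ^ 2 ∂μ = ∫ ω, ‖G k ω‖ ^ 2 ∂μ - ‖g‖ ^ 2 := by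
      have h3 : Integrable (fun ω => ‖G k ω‖ ^ 2 - 2 * inner ℝ g (G k ω)) μ :=
        (hG2 k).sub (hin.const_mul 2)
      simp_rw [h1]
      rw [integral_add h3 (integrable_const _),
        integral_sub (hG2 k) (hin.const_mul 2), integral_const_mul,
        integral_inner (hGint k), hmean k, real_inner_self_eq_norm_sq]
      simp
      ring
    have := hvar k
    linarith
  have hconv : ConvexOn ℝ Set.univ (fun x : E => ‖x‖ ^ 2) :=
    convexOn_univ_norm.pow (fun x _ => norm_nonneg x) 2
  have hsum1 : ∑ k, B k / ∑ j, B j = 1 := by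
    rw [← Finset.sum_div, div_self hS.ne']
  have hpt : ∀ ω, ‖∑ k, (B k / ∑ j, B j) • G k ω‖ ^ 2 ≤
      ∑ k, (B k / ∑ j, B j) * ‖G k ω‖ ^ 2 := by
    intro ω
    have := hconv.map_sum_le (t := Finset.univ) (w := fun k => B k / ∑ j, B j)
      (p := fun k => G k ω) (fun k _ => (div_pos (hB k) hS).le) hsum1 (fun k _ => Set.mem_univ _)
    simpa only [smul_eq_mul] using this
  have hint : ∀ k ∈ Finset.univ, Integrable (fun ω => (B k / ∑ j, B j) * ‖G k ω‖ ^ 2) μ :=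
    fun k _ => (hG2 k).const_mul _
  calc ∫ ω, ‖∑ k, (B k / ∑ j, B j) • G k ω‖ ^ 2 ∂μ
      ≤ ∫ ω, ∑ k, (B k / ∑ j, B j) * ‖G k ω‖ ^ 2 ∂μ :=
        integral_mono_of_nonneg (Filter.Eventually.of_forall fun ω => by positivity)
          (integrable_finsetSum _ hint) (Filter.Eventually.of_forall hpt)
    _ = ∑ k, (B k / ∑ j, B j) * ∫ ω, ‖G k ω‖ ^ 2 ∂μ := by
        rw [integral_finsetSum _ hint]
        simp_rw [integral_const_mul]
    _ ≤ ∑ k, (B k / ∑ j, B j) * (‖g‖ ^ 2 + αhat ^ 2 / B k) :=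
        Finset.sum_le_sum fun k _ =>
          mul_le_mul_of_nonneg_left (hsecond k) (div_pos (hB k) hS).le
    _ = ∑ k, ((B k / ∑ j, B j) * ‖g‖ ^ 2 + αhat ^ 2 / ∑ j, B j) := by
        refine Finset.sum_congr rfl fun k _ => ?_
        have := (hB k).ne'
        have := hS.ne'
        field_simp
    _ = ‖g‖ ^ 2 + K * αhat ^ 2 / ∑ k, B k := by
        rw [Finset.sum_add_distrib, ← Finset.sum_mul, hsum1]
        simp
        ring
end
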